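/- Let L ⊆ ℂ be a closed set without isolated points. Then the class of nowhere holomorphically extendable functions f ∈ C(L) — that is, those f for which there exists no triple of a point z0 ∈ L, a radius r > 0 and a holomorphic function F : D(z0, r) → ℂ such that F = f on D(z0, r) ∩ L — is a dense and Gδ subset of C(L). -/

import Mathlib

open Set Metric

/-!
Fix a disc `D(c, r)` centred on `L` and a bound `M`. The functions given on `D(c, r) ∩ L` by a power
series whose `n`-th coefficient is at most `M / r ^ n` form a closed set: the admissible coefficient
sequences range over a compact product of balls, and projecting away a compact factor is a closed
map. This set lies in the linear subspace of functions extending holomorphically to `D(c, r)`, which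
is proper because `√|z - c|` is not in it, and hence has empty interior. By Cauchy's estimates, an
extendable function belongs to one of these sets with `c` in a fixed countable dense subset of `L`,
`r = 1 / (k + 1)` and `M ∈ ℕ`, so Baire's theorem applies to countably many complements.
-/

open Filter Topology Asymptotics

theorem isLittleO_sub_sqrt_norm_sub {V : Type*} [SeminormedAddCommGroup V] (c : V) :
    (fun z => z - c) =o[𝓝 c] fun z => √‖z - c‖ := by
  have hsqrt : (fun z => √‖z - c‖) =o[𝓝 c] fun _ => (1 : ℝ) := by
    rw [isLittleO_one_iff]
    exact Continuous.tendsto' (by fun_prop) _ _ (by simp)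
  simpa using hsqrt.mul_isBigO (isBigO_refl (fun z => √‖z - c‖) (𝓝 c))

theorem not_differentiableAt_of_norm_eq_sqrt (𝕜 : Type*) [NontriviallyNormedField 𝕜]
    {V E : Type*} [NormedAddCommGroup V] [NormedSpace 𝕜 V] [NormedAddCommGroup E] [NormedSpace 𝕜 E]
    {F : V → E} {s : Set V} {c : V} (hc : AccPt c (𝓟 s)) (hcs : c ∈ s)
    (hF : ∀ᶠ z in 𝓝[s] c, ‖F z‖ = √‖z - c‖) : ¬ DifferentiableAt 𝕜 F c := by
  intro hd
  have hFc : F c = 0 := by simpa using hF.self_of_nhdsWithin hcs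
  have hF_isBigO : F =O[𝓝 c] fun z => z - c := by simpa [hFc] using hd.isBigO_sub
  have hF_isLittleO : F =o[𝓝[s] c] fun z => √‖z - c‖ :=
    (hF_isBigO.trans_isLittleO (isLittleO_sub_sqrt_norm_sub c)).mono nhdsWithin_le_nhds
  have hsqrt : (fun z => √‖z - c‖) =o[𝓝[s] c] fun z => √‖z - c‖ :=
    hF_isLittleO.norm_left.congr' hF .rfl
  have hne : ∃ᶠ z in 𝓝[s] c, √‖z - c‖ ≠ 0 :=
    frequently_nhdsWithin_iff.2 <| (accPt_iff_frequently.1 hc).mono fun z hz =>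
      ⟨(Real.sqrt_pos.2 (norm_sub_pos_iff.2 hz.1)).ne', hz.2⟩
  exact isLittleO_irrefl hne hsqrt

theorem norm_pow_smul_le_of_norm_le_div_pow {𝕜 E : Type*} [NormedField 𝕜]
    [SeminormedAddCommGroup E] [NormedSpace 𝕜 E] {a : E} {w : 𝕜} {M r s : ℝ} {n : ℕ}
    (ha : ‖a‖ ≤ M / r ^ n) (hw : ‖w‖ ≤ s) :
    ‖w ^ n • a‖ ≤ M * (s / r) ^ n := by
  have hs : 0 ≤ s := (norm_nonneg w).trans hw
  calc ‖w ^ n • a‖ = ‖w‖ ^ n * ‖a‖ := by rw [norm_smul, norm_pow]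
    _ ≤ s ^ n * (M / r ^ n) := by gcongr
    _ = M * (s / r) ^ n := by rw [div_pow]; ring

theorem summable_mul_div_pow (M : ℝ) {r s : ℝ} (hs : 0 ≤ s) (hsr : s < r) :
    Summable fun n : ℕ => M * (s / r) ^ n :=
  (summable_geometric_of_lt_one (div_nonneg hs (hs.trans hsr.le))
    ((div_lt_one (hs.trans_lt hsr)).2 hsr)).mul_left M

section HolExtendable

variable {E : Type*} [NormedAddCommGroup E] [NormedSpace ℂ E] {L : Set ℂ}

/-- The subspace of those `f ∈ C(L, E)` which agree on `ball c r ∩ L` with a function holomorphic on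
`ball c r`. The extension is encoded as a function on all of `ℂ` with arbitrary values outside the
ball. -/
def holExtendable (L : Set ℂ) (E : Type*) [NormedAddCommGroup E] [NormedSpace ℂ E] (c : ℂ) (r : ℝ) :
    Submodule ℂ C(L, E) where
  carrier := {f | ∃ F : ℂ → E, DifferentiableOn ℂ F (ball c r) ∧
    ∀ z : L, (z : ℂ) ∈ ball c r → F z = f z}
  zero_mem' := ⟨0, differentiableOn_const 0, fun _ _ => rfl⟩
  add_mem' := by
    rintro f g ⟨F, hF, hFf⟩ ⟨G, hG, hGg⟩
    exact ⟨F + G, hF.add hG, fun z hz => by simp [hFf z hz, hGg z hz]⟩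
  smul_mem' := by
    rintro k f ⟨F, hF, hFf⟩
    exact ⟨k • F, hF.const_smul k, fun z hz => by simp [hFf z hz]⟩

theorem holExtendable_ne_top [Nontrivial E] {c : ℂ} {r : ℝ} (hc : AccPt c (𝓟 L))
    (hcL : c ∈ L) (hr : 0 < r) : holExtendable L E c r ≠ ⊤ := by
  intro htop
  obtain ⟨v, hv⟩ := exists_norm_eq E zero_le_one
  let g : C(L, E) := ⟨fun z => √‖(z : ℂ) - c‖ • v, by fun_prop⟩
  obtain ⟨F, hF, hFg⟩ : g ∈ holExtendable L E c r := htop ▸ Submodule.mem_top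
  refine not_differentiableAt_of_norm_eq_sqrt ℂ hc hcL ?_
    (hF.differentiableAt (ball_mem_nhds c hr))
  filter_upwards [self_mem_nhdsWithin, mem_nhdsWithin_of_mem_nhds (ball_mem_nhds c hr)]
    with z hzL hz
  simp [hFg ⟨z, hzL⟩ hz, g, norm_smul, hv]

theorem differentiableOn_tsum_pow_smul [CompleteSpace E] {a : ℕ → E} {M r : ℝ}
    (ha : ∀ n, ‖a n‖ ≤ M / r ^ n) (c : ℂ) :
    DifferentiableOn ℂ (fun z => ∑' n, (z - c) ^ n • a n) (ball c r) := by
  intro z hz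
  obtain ⟨s, hzs, hsr⟩ := exists_between (mem_ball.1 hz)
  have hs : DifferentiableOn ℂ (fun z => ∑' n, (z - c) ^ n • a n) (ball c s) :=
    Complex.differentiableOn_tsum_of_summable_norm
      (summable_mul_div_pow M (dist_nonneg.trans hzs.le) hsr)
      (fun n => by fun_prop) isOpen_ball
      (fun n w hw => norm_pow_smul_le_of_norm_le_div_pow (ha n) (mem_ball_iff_norm.1 hw).le)
  exact (hs.differentiableAt (isOpen_ball.mem_nhds hzs)).differentiableWithinAt

theorem exists_forall_norm_taylorCoeff_le [CompleteSpace E] {F : ℂ → E} {c : ℂ} {r : ℝ}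
    (hr : 0 < r) (hF : DifferentiableOn ℂ F (closedBall c r)) :
    ∃ M : ℝ, ∀ n : ℕ, ‖(n.factorial : ℂ)⁻¹ • iteratedDeriv n F c‖ ≤ M / r ^ n := by
  obtain ⟨M, hM⟩ := (isCompact_sphere c r).exists_bound_of_continuousOn
    (hF.continuousOn.mono sphere_subset_closedBall)
  have hFcl : DiffContOnCl ℂ F (ball c r) :=
    DifferentiableOn.diffContOnCl (by rwa [closure_ball c hr.ne'])
  refine ⟨M, fun n => ?_⟩
  have hcauchy := Complex.norm_iteratedDeriv_le_of_forall_mem_sphere_norm_le n hr hFcl hM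
  rw [norm_smul, norm_inv, Complex.norm_natCast, inv_mul_le_iff₀ (by positivity), ← mul_div_assoc]
  exact hcauchy

/-- The functions given on `ball c r ∩ L` by a power series centred at `c` whose coefficients
satisfy the Cauchy estimates with constant `M` on the circle of radius `r`. These bounds make the
series converge on the ball, so the infinite sum has no junk value there. -/
def powerSeriesExtendable (L : Set ℂ) (E : Type*) [NormedAddCommGroup E] [NormedSpace ℂ E] (c : ℂ)
    (r M : ℝ) : Set C(L, E) :=
  {f | ∃ a : ℕ → E, (∀ n, ‖a n‖ ≤ M / r ^ n) ∧
    ∀ z : L, (z : ℂ) ∈ ball c r → ∑' n, ((z : ℂ) - c) ^ n • a n = f z}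

theorem isClosed_powerSeriesExtendable [ProperSpace E] (L : Set ℂ) (c : ℂ) (r M : ℝ) :
    IsClosed (powerSeriesExtendable L E c r M) := by
  let K := (n : ℕ) → closedBall (0 : E) (M / r ^ n)
  let S : Set (C(L, E) × K) := {p | ∀ z : L, (z : ℂ) ∈ ball c r →
    ∑' n, ((z : ℂ) - c) ^ n • (p.2 n : E) = p.1 z}
  have hK (a : K) (n : ℕ) : ‖(a n : E)‖ ≤ M / r ^ n := mem_closedBall_zero_iff.1 (a n).2
  have hS : IsClosed S := by
    simp only [S, ofPred_forall]
    refine isClosed_iInter fun z => isClosed_iInter fun hz => isClosed_eq ?_ (by fun_prop)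
    exact continuous_tsum (fun n => by fun_prop)
      (summable_mul_div_pow M (norm_nonneg _) (mem_ball_iff_norm.1 hz))
      (fun n p => norm_pow_smul_le_of_norm_le_div_pow (hK p.2 n) le_rfl)
  have himage : powerSeriesExtendable L E c r M = Prod.fst '' S := by
    ext f
    constructor
    · rintro ⟨a, ha, hf⟩
      exact ⟨(f, fun n => ⟨a n, mem_closedBall_zero_iff.2 (ha n)⟩), hf, rfl⟩
    · rintro ⟨⟨f, a⟩, hf, rfl⟩
      exact ⟨fun n => a n, hK a, hf⟩
  rw [himage]
  exact isClosedMap_fst_of_compactSpace _ hS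

theorem powerSeriesExtendable_subset_holExtendable [CompleteSpace E] (L : Set ℂ) (c : ℂ)
    (r M : ℝ) : powerSeriesExtendable L E c r M ⊆ holExtendable L E c r :=
  fun _ ⟨_, ha, hf⟩ => ⟨_, differentiableOn_tsum_pow_smul ha c, hf⟩

theorem dense_compl_powerSeriesExtendable [CompleteSpace E] [Nontrivial E] {c : ℂ}
    {r : ℝ} (hc : AccPt c (𝓟 L)) (hcL : c ∈ L) (hr : 0 < r) (M : ℝ) :
    Dense (powerSeriesExtendable L E c r M)ᶜ := by
  rw [← interior_eq_empty_iff_dense_compl, ← not_nonempty_iff_eq_empty]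
  intro hne
  exact holExtendable_ne_top hc hcL hr <| Submodule.eq_top_of_nonempty_interior' _ <|
    hne.mono (interior_mono (powerSeriesExtendable_subset_holExtendable L c r M))

theorem exists_nat_mem_powerSeriesExtendable [CompleteSpace E] {f : C(L, E)}
    {F : ℂ → E} {c : ℂ} {r : ℝ} (hr : 0 < r) (hF : DifferentiableOn ℂ F (closedBall c r))
    (hFf : ∀ z : L, (z : ℂ) ∈ ball c r → F z = f z) :
    ∃ M : ℕ, f ∈ powerSeriesExtendable L E c r M := by
  obtain ⟨M, hM⟩ := exists_forall_norm_taylorCoeff_le hr hF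
  obtain ⟨N, hMN⟩ := exists_nat_ge M
  refine ⟨N, _, fun n => (hM n).trans (by gcongr), fun z hz => ?_⟩
  rw [← hFf z hz, ← Complex.taylorSeries_eq_on_ball (hF.mono ball_subset_closedBall) hz]
  exact tsum_congr fun n => smul_comm _ _ _

/-- The class of nowhere holomorphically extendable functions: those `f ∈ C(L, E)` which extend
holomorphically to no disc centred at a point of `L`. -/
def nowhereHolExtendable (L : Set ℂ) (E : Type*) [NormedAddCommGroup E] [NormedSpace ℂ E] :
    Set C(L, E) :=
  {f | ¬ ∃ z₀ ∈ L, ∃ r : ℝ, 0 < r ∧ f ∈ holExtendable L E z₀ r}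

theorem exists_mem_powerSeriesExtendable [CompleteSpace E] {D : Set L} (hD : Dense D)
    {f : C(L, E)} {z₀ : ℂ} {r : ℝ} (hz₀ : z₀ ∈ L) (hr : 0 < r) (hf : f ∈ holExtendable L E z₀ r) :
    ∃ c ∈ D, ∃ k M : ℕ, f ∈ powerSeriesExtendable L E c (1 / ((k : ℝ) + 1)) M := by
  obtain ⟨F, hF, hFf⟩ := hf
  obtain ⟨k, hk⟩ := exists_nat_one_div_lt (half_pos hr)
  obtain ⟨c, hcD, hc⟩ := hD.exists_dist_lt (⟨z₀, hz₀⟩ : L) (half_pos hr)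
  have hsub : closedBall (c : ℂ) (1 / ((k : ℝ) + 1)) ⊆ ball z₀ r := by
    refine closedBall_subset_ball' ?_
    have hcz₀ : dist (c : ℂ) z₀ < r / 2 := by rwa [dist_comm]
    linarith
  exact ⟨c, hcD, k, exists_nat_mem_powerSeriesExtendable Nat.one_div_pos_of_nat (hF.mono hsub)
    fun z hz => hFf z (hsub (ball_subset_closedBall hz))⟩

theorem nowhereHolExtendable_eq_iInter [CompleteSpace E] {D : Set L} (hD : Dense D) :
    nowhereHolExtendable L E =
      ⋂ p : D × ℕ × ℕ, (powerSeriesExtendable L E (p.1 : L) (1 / ((p.2.1 : ℝ) + 1)) p.2.2)ᶜ := by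
  ext f
  rw [← compl_iUnion, mem_compl_iff, mem_iUnion]
  refine not_congr ⟨?_, ?_⟩
  · rintro ⟨z₀, hz₀, r, hr, hf⟩
    obtain ⟨c, hcD, k, M, hfM⟩ := exists_mem_powerSeriesExtendable hD hz₀ hr hf
    exact ⟨(⟨c, hcD⟩, k, M), hfM⟩
  · rintro ⟨⟨c, k, M⟩, hfM⟩
    exact ⟨(c : L), (c : L).2, _, Nat.one_div_pos_of_nat,
      powerSeriesExtendable_subset_holExtendable _ _ _ _ hfM⟩

theorem isGδ_nowhereHolExtendable [ProperSpace E] (L : Set ℂ) :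
    IsGδ (nowhereHolExtendable L E) := by
  obtain ⟨D, hDcount, hD⟩ := TopologicalSpace.exists_countable_dense L
  have : Countable D := hDcount.to_subtype
  rw [nowhereHolExtendable_eq_iInter hD]
  exact .iInter fun p => (isClosed_powerSeriesExtendable L _ _ _).isOpen_compl.isGδ

theorem dense_nowhereHolExtendable [ProperSpace E] [Nontrivial E] (hL : IsLocallyClosed L)
    (hacc : Preperfect L) : Dense (nowhereHolExtendable L E) := by
  have : LocallyCompactSpace L := hL.locallyCompactSpace
  obtain ⟨D, hDcount, hD⟩ := TopologicalSpace.exists_countable_dense L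
  have : Countable D := hDcount.to_subtype
  rw [nowhereHolExtendable_eq_iInter hD]
  exact dense_iInter_of_isOpen (fun p => (isClosed_powerSeriesExtendable L _ _ _).isOpen_compl)
    fun p => dense_compl_powerSeriesExtendable (hacc _ (p.1 : L).2) (p.1 : L).2
      Nat.one_div_pos_of_nat _

end HolExtendable

theorem nowhereHolExtendable_dense_Gdelta_general
    {E : Type*} [NormedAddCommGroup E] [NormedSpace ℂ E] [ProperSpace E] [Nontrivial E]
    {L : Set ℂ} (hL : IsLocallyClosed L) (hacc : Preperfect L) :
    Dense (nowhereHolExtendable L E) ∧ IsGδ (nowhereHolExtendable L E) :=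
  ⟨dense_nowhereHolExtendable hL hacc, isGδ_nowhereHolExtendable L⟩

/-- Let `L ⊆ ℂ` be closed without isolated points. The class of nowhere
holomorphically extendable functions `f ∈ C(L)` (with the topology of uniform
convergence on compact subsets of `L`, i.e. the compact-open topology) — i.e. there
is no `z0 ∈ L`, `r > 0` and holomorphic `F : D(z0, r) → ℂ` with `F = f` on
`D(z0, r) ∩ L` — is a dense and `Gδ` subset of `C(L)`. -/
theorem nowhereHolExtendable_dense_Gdelta
    (L : Set ℂ) (hLclosed : IsClosed L)
    (hno_iso : ∀ z ∈ L, z ∈ closure (L \ {z})) :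
    Dense {f : C(L, ℂ) | ¬ ∃ z0 ∈ L, ∃ r : ℝ, 0 < r ∧ ∃ F : ℂ → ℂ,
        DifferentiableOn ℂ F (ball z0 r) ∧
        ∀ z : L, (z : ℂ) ∈ ball z0 r → F (z : ℂ) = f z} ∧
    IsGδ {f : C(L, ℂ) | ¬ ∃ z0 ∈ L, ∃ r : ℝ, 0 < r ∧ ∃ F : ℂ → ℂ,
        DifferentiableOn ℂ F (ball z0 r) ∧
        ∀ z : L, (z : ℂ) ∈ ball z0 r → F (z : ℂ) = f z} :=
  nowhereHolExtendable_dense_Gdelta_general hLclosed.isLocallyClosed fun z hz =>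
    accPt_principal_iff_clusterPt.2 (mem_closure_iff_clusterPt.1 (hno_iso z hz))
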